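/- arXiv:2003.06457 — 14 statements merged into one kernel-verified Lean document; each statement's English description precedes it below -/
import Mathlib

section
/- Let Ω be a nonempty set, X a set, S a linear subspace of the real vector space of functions Ω → ℝ (with pointwise operations) containing the constant function 1, and T : S → ℝ a linear map that is signature-preserving (T(ζ) ≥ 0 whenever ζ ∈ S satisfies ζ(ω) ≥ 0 for all ω ∈ Ω). Let η, ξ : Ω → X and f : X → ℝ be such that f∘η, f∘ξ, their pointwise squares f²∘η, f²∘ξ, and the pointwise product (f∘η)·(f∘ξ) all belong to S. Let a, b ∈ ℝ with a ≠ 0 and a + b > 0, and suppose f(ξ(ω)) − f(η(ω)) ≤ b for all ω ∈ Ω and f(ξ(ω)) + f(η(ω)) ≤ a for all ω ∈ Ω. Set c = (2/a)·T(f∘η), C₁ = (T(1) − c)·b + T(f∘η) − T(f∘ξ), and C₂ = (T(1) − c)·b² + T(f²∘η) − T(f²∘ξ). Then C₂ ≥ 0 implies C₁ ≥ 0. -/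
theorem hlawka_form_I_forward {Ω X : Type*} [Nonempty Ω]
    (S : Submodule ℝ (Ω → ℝ)) (h1 : (1 : Ω → ℝ) ∈ S)
    (T : S →ₗ[ℝ] ℝ)
    (hT : ∀ ζ : S, (∀ ω : Ω, 0 ≤ (ζ : Ω → ℝ) ω) → 0 ≤ T ζ)
    (η ξ : Ω → X) (f : X → ℝ)
    (hfη : (fun ω => f (η ω)) ∈ S) (hfξ : (fun ω => f (ξ ω)) ∈ S)
    (hfη2 : (fun ω => (f (η ω)) ^ 2) ∈ S) (hfξ2 : (fun ω => (f (ξ ω)) ^ 2) ∈ S)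
    (hprod : (fun ω => f (η ω) * f (ξ ω)) ∈ S)
    (a b : ℝ) (ha : a ≠ 0) (hab : 0 < a + b)
    (hdiff : ∀ ω : Ω, f (ξ ω) - f (η ω) ≤ b)
    (hsum : ∀ ω : Ω, f (ξ ω) + f (η ω) ≤ a) :
    0 ≤ (T ⟨1, h1⟩ - (2 / a) * T ⟨fun ω => f (η ω), hfη⟩) * b ^ 2
        + T ⟨fun ω => (f (η ω)) ^ 2, hfη2⟩ - T ⟨fun ω => (f (ξ ω)) ^ 2, hfξ2⟩ →
    0 ≤ (T ⟨1, h1⟩ - (2 / a) * T ⟨fun ω => f (η ω), hfη⟩) * b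
        + T ⟨fun ω => f (η ω), hfη⟩ - T ⟨fun ω => f (ξ ω), hfξ⟩ := by
  intro hC
  have key := hT ((a * b) • (⟨1, h1⟩ : S) - (a + b) • (⟨fun ω => f (ξ ω), hfξ⟩ : S)
    + (a - b) • (⟨fun ω => f (η ω), hfη⟩ : S) + (⟨fun ω => (f (ξ ω)) ^ 2, hfξ2⟩ : S)
    - (⟨fun ω => (f (η ω)) ^ 2, hfη2⟩ : S)) (by
      intro ω
      have h := mul_nonneg (sub_nonneg.2 (hdiff ω)) (sub_nonneg.2 (hsum ω))
      simp
      linarith)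
  simp only [map_add, map_sub, map_smul, smul_eq_mul] at key
  generalize T ⟨1, h1⟩ = t at *
  generalize T ⟨fun ω => f (η ω), hfη⟩ = y at *
  generalize T ⟨fun ω => f (ξ ω), hfξ⟩ = x at *
  generalize T ⟨fun ω => (f (η ω)) ^ 2, hfη2⟩ = y2 at *
  generalize T ⟨fun ω => (f (ξ ω)) ^ 2, hfξ2⟩ = x2 at *
  refine nonneg_of_mul_nonneg_right (a := a + b) ?_ hab
  have e : (a + b) * ((t - 2 / a * y) * b + y - x)
      = (a * b * t - (a + b) * x + (a - b) * y + x2 - y2)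
        + ((t - 2 / a * y) * b ^ 2 + y2 - x2) := by
    field_simp
    ring
  rw [e]
  exact add_nonneg key hC
end

section
/- Let Ω be a nonempty set, X a set, S a linear subspace of the real vector space of functions Ω → ℝ (with pointwise operations) containing the constant function 1, and T : S → ℝ a linear map that is signature-preserving (T(ζ) ≥ 0 whenever ζ ∈ S satisfies ζ(ω) ≥ 0 for all ω ∈ Ω). Let η, ξ : Ω → X and f : X → ℝ be such that f∘η, f∘ξ, their pointwise squares f²∘η, f²∘ξ, and the pointwise product (f∘η)·(f∘ξ) all belong to S. Let a, b ∈ ℝ with a ≠ 0 and a + b > 0, and suppose f(ξ(ω)) − f(η(ω)) ≤ b for all ω ∈ Ω and f(ξ(ω)) + f(η(ω)) ≤ a for all ω ∈ Ω. Set c = (2/a)·T(f∘η), C₁ = (T(1) − c)·b + T(f∘η) − T(f∘ξ), and C₂ = (T(1) − c)·b² + T(f²∘η) − T(f²∘ξ). Then C₁ ≤ 0 implies C₂ ≤ 0. -/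
theorem hlawka_form_I_backward {Ω X : Type*} [Nonempty Ω]
    (S : Submodule ℝ (Ω → ℝ)) (h1 : (1 : Ω → ℝ) ∈ S)
    (T : S →ₗ[ℝ] ℝ)
    (hT : ∀ ζ : S, (∀ ω : Ω, 0 ≤ (ζ : Ω → ℝ) ω) → 0 ≤ T ζ)
    (η ξ : Ω → X) (f : X → ℝ)
    (hfη : (fun ω => f (η ω)) ∈ S) (hfξ : (fun ω => f (ξ ω)) ∈ S)
    (hfη2 : (fun ω => (f (η ω)) ^ 2) ∈ S) (hfξ2 : (fun ω => (f (ξ ω)) ^ 2) ∈ S)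
    (hprod : (fun ω => f (η ω) * f (ξ ω)) ∈ S)
    (a b : ℝ) (ha : a ≠ 0) (hab : 0 < a + b)
    (hdiff : ∀ ω : Ω, f (ξ ω) - f (η ω) ≤ b)
    (hsum : ∀ ω : Ω, f (ξ ω) + f (η ω) ≤ a) :
    (T ⟨1, h1⟩ - (2 / a) * T ⟨fun ω => f (η ω), hfη⟩) * b + T ⟨fun ω => f (η ω), hfη⟩ - T ⟨fun ω => f (ξ ω), hfξ⟩ ≤ 0 → (T ⟨1, h1⟩ - (2 / a) * T ⟨fun ω => f (η ω), hfη⟩) * b ^ 2 + T ⟨fun ω => (f (η ω)) ^ 2, hfη2⟩ - T ⟨fun ω => (f (ξ ω)) ^ 2, hfξ2⟩ ≤ 0 := by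
  intro hC
  have key := hT ((a * b) • ⟨1, h1⟩ - (a + b) • ⟨fun ω => f (ξ ω), hfξ⟩
    + (a - b) • ⟨fun ω => f (η ω), hfη⟩ + ⟨fun ω => (f (ξ ω)) ^ 2, hfξ2⟩
    - ⟨fun ω => (f (η ω)) ^ 2, hfη2⟩) (by
      intro ω
      have h := mul_nonneg (sub_nonneg.2 (hdiff ω)) (sub_nonneg.2 (hsum ω))
      simp only [Submodule.coe_sub, Submodule.coe_add, Submodule.coe_smul, Pi.sub_apply,
        Pi.add_apply, Pi.smul_apply, Pi.one_apply, smul_eq_mul]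
      linarith)
  simp only [map_sub, map_add, map_smul, smul_eq_mul] at key
  generalize T ⟨1, h1⟩ = t at *
  generalize T ⟨fun ω => f (η ω), hfη⟩ = Y at *
  generalize T ⟨fun ω => f (ξ ω), hfξ⟩ = Z at *
  have h2 := mul_nonpos_of_nonneg_of_nonpos hab.le hC
  have h3 : (a + b) * ((t - 2 / a * Y) * b + Y - Z)
      = (t - 2 / a * Y) * b ^ 2 + a * b * t - b * Y + a * Y - a * Z - b * Z := by
    field_simp
    ring
  linarith
end

section
/- Let Ω be a nonempty set, X a set, S a linear subspace of the real vector space of functions Ω → ℝ (with pointwise operations) containing the constant function 1, and T : S → ℝ a linear map that is signature-preserving (T(ζ) ≥ 0 whenever ζ ∈ S satisfies ζ(ω) ≥ 0 for all ω ∈ Ω). Let η, ξ : Ω → X and f : X → ℝ be such that f∘η, f∘ξ, their pointwise squares f²∘η, f²∘ξ, and the pointwise product (f∘η)·(f∘ξ) all belong to S. Let a, b ∈ ℝ with a ≠ 0 and a + b > 0, and suppose f(ξ(ω)) − f(η(ω)) ≤ b for all ω ∈ Ω and f(ξ(ω)) + f(η(ω)) ≥ a for all ω ∈ Ω. Set c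 = (2/a)·T(f∘η), C₁ = (T(1) − c)·b + T(f∘η) − T(f∘ξ), and C₂ = (T(1) − c)·b² + T(f²∘η) − T(f²∘ξ). Then C₁ ≥ 0 implies C₂ ≥ 0. -/
theorem hlawka_form_II_forward {Ω X : Type*} [Nonempty Ω]
    (S : Submodule ℝ (Ω → ℝ)) (h1 : (1 : Ω → ℝ) ∈ S)
    (T : S →ₗ[ℝ] ℝ)
    (hT : ∀ ζ : S, (∀ ω : Ω, 0 ≤ (ζ : Ω → ℝ) ω) → 0 ≤ T ζ)
    (η ξ : Ω → X) (f : X → ℝ)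
    (hfη : (fun ω => f (η ω)) ∈ S) (hfξ : (fun ω => f (ξ ω)) ∈ S)
    (hfη2 : (fun ω => (f (η ω)) ^ 2) ∈ S) (hfξ2 : (fun ω => (f (ξ ω)) ^ 2) ∈ S)
    (hprod : (fun ω => f (η ω) * f (ξ ω)) ∈ S)
    (a b : ℝ) (ha : a ≠ 0) (hab : 0 < a + b)
    (hdiff : ∀ ω : Ω, f (ξ ω) - f (η ω) ≤ b)
    (hsum : ∀ ω : Ω, a ≤ f (ξ ω) + f (η ω)) :
    0 ≤ (T ⟨1, h1⟩ - (2 / a) * T ⟨fun ω => f (η ω), hfη⟩) * b + T ⟨fun ω => f (η ω), hfη⟩ - T ⟨fun ω => f (ξ ω), hfξ⟩ → 0 ≤ (T ⟨1, h1⟩ - (2 / a) * T ⟨fun ω => f (η ω), hfη⟩) * b ^ 2 + T ⟨fun ω => (f (η ω)) ^ 2, hfη2⟩ - T ⟨fun ω => (f (ξ ω)) ^ 2, hfξ2⟩ := by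
  intro hC
  have key := hT (b • (⟨fun ω => f (ξ ω), hfξ⟩ : S) + b • (⟨fun ω => f (η ω), hfη⟩ : S)
      - (a * b) • (⟨1, h1⟩ : S) - (⟨fun ω => (f (ξ ω)) ^ 2, hfξ2⟩ : S)
      + (⟨fun ω => (f (η ω)) ^ 2, hfη2⟩ : S)
      + a • (⟨fun ω => f (ξ ω), hfξ⟩ : S) - a • (⟨fun ω => f (η ω), hfη⟩ : S)) (by
    intro ω
    have h := mul_nonneg (sub_nonneg.2 (hdiff ω)) (sub_nonneg.2 (hsum ω))
    simp only [Submodule.coe_add, Submodule.coe_sub, Submodule.coe_smul, Pi.add_apply,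
      Pi.sub_apply, Pi.smul_apply, Pi.one_apply, smul_eq_mul]
    linarith)
  simp only [map_add, map_sub, map_smul, smul_eq_mul] at key
  have hC' := mul_nonneg hab.le hC
  generalize T ⟨1, h1⟩ = t at *
  generalize T ⟨fun ω => f (η ω), hfη⟩ = y at *
  generalize T ⟨fun ω => f (ξ ω), hfξ⟩ = x at *
  obtain ⟨c, rfl⟩ : ∃ c, y = a * c := ⟨y / a, by field_simp⟩
  have e : 2 / a * (a * c) = 2 * c := by field_simp
  rw [e] at hC' ⊢
  linarith
end

section
/- Let Ω be a nonempty set, X a set, S a linear subspace of the real vector space of functions Ω → ℝ (with pointwise operations) containing the constant function 1, and T : S → ℝ a linear map that is signature-preserving (T(ζ) ≥ 0 whenever ζ ∈ S satisfies ζ(ω) ≥ 0 for all ω ∈ Ω). Let η, ξ : Ω → X and f : X → ℝ be such that f∘η, f∘ξ, their pointwise squares f²∘η, f²∘ξ, and the pointwise product (f∘η)·(f∘ξ) all belong to S. Let a, b ∈ ℝ with a ≠ 0 and a + b > 0, and suppose f(ξ(ω)) − f(η(ω)) ≤ b for all ω ∈ Ω and f(ξ(ω)) + f(η(ω)) ≥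 a for all ω ∈ Ω. Set c = (2/a)·T(f∘η), C₁ = (T(1) − c)·b + T(f∘η) − T(f∘ξ), and C₂ = (T(1) − c)·b² + T(f²∘η) − T(f²∘ξ). Then C₂ ≤ 0 implies C₁ ≤ 0. -/
theorem hlawka_form_II_backward {Ω X : Type*} [Nonempty Ω]
    (S : Submodule ℝ (Ω → ℝ)) (h1 : (1 : Ω → ℝ) ∈ S)
    (T : S →ₗ[ℝ] ℝ)
    (hT : ∀ ζ : S, (∀ ω : Ω, 0 ≤ (ζ : Ω → ℝ) ω) → 0 ≤ T ζ)
    (η ξ : Ω → X) (f : X → ℝ)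
    (hfη : (fun ω => f (η ω)) ∈ S) (hfξ : (fun ω => f (ξ ω)) ∈ S)
    (hfη2 : (fun ω => (f (η ω)) ^ 2) ∈ S) (hfξ2 : (fun ω => (f (ξ ω)) ^ 2) ∈ S)
    (hprod : (fun ω => f (η ω) * f (ξ ω)) ∈ S)
    (a b : ℝ) (ha : a ≠ 0) (hab : 0 < a + b)
    (hdiff : ∀ ω : Ω, f (ξ ω) - f (η ω) ≤ b)
    (hsum : ∀ ω : Ω, a ≤ f (ξ ω) + f (η ω)) :
    (T ⟨1, h1⟩ - (2 / a) * T ⟨fun ω => f (η ω), hfη⟩) * b ^ 2 + T ⟨fun ω => (f (η ω)) ^ 2, hfη2⟩ - T ⟨fun ω => (f (ξ ω)) ^ 2, hfξ2⟩ ≤ 0 → (T ⟨1, h1⟩ - (2 / a) * T ⟨fun ω => f (η ω), hfη⟩) * b + T ⟨fun ω => f (η ω), hfη⟩ - T ⟨fun ω => f (ξ ω), hfξ⟩ ≤ 0 := by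
  intro hC
  have key := hT (b • ((⟨fun ω => f (η ω), hfη⟩ : S) + ⟨fun ω => f (ξ ω), hfξ⟩)
    - (a * b) • (⟨1, h1⟩ : S) + ⟨fun ω => (f (η ω)) ^ 2, hfη2⟩
    - ⟨fun ω => (f (ξ ω)) ^ 2, hfξ2⟩
    + a • ((⟨fun ω => f (ξ ω), hfξ⟩ : S) - ⟨fun ω => f (η ω), hfη⟩)) (by
      intro ω
      have h := mul_nonneg (sub_nonneg.2 (hdiff ω)) (sub_nonneg.2 (hsum ω))
      simp only [Submodule.coe_add, Submodule.coe_sub, Submodule.coe_smul, Pi.add_apply,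
        Pi.sub_apply, Pi.smul_apply, Pi.one_apply, smul_eq_mul]
      linarith)
  simp only [map_add, map_sub, map_smul, smul_eq_mul] at key
  generalize T ⟨1, h1⟩ = t at *
  generalize T ⟨fun ω => f (η ω), hfη⟩ = x at *
  generalize T ⟨fun ω => f (ξ ω), hfξ⟩ = y at *
  generalize T ⟨fun ω => (f (η ω)) ^ 2, hfη2⟩ = x2 at *
  generalize T ⟨fun ω => (f (ξ ω)) ^ 2, hfξ2⟩ = y2 at *
  have hc : a * (2 / a * x) = 2 * x := by field_simp
  generalize 2 / a * x = c at *
  have h3 : (a + b) * ((t - c) * b + x - y) ≤ 0 := by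
    linear_combination key + hC - b * hc
  by_contra hn
  have := mul_pos hab (not_le.1 hn)
  linarith
end

section
/- Let G be an abelian (additive) semigroup and F : G → ℝ a nonnegative function that is strongly subadditive, i.e. F(x) + F(y) ≥ F(x+y) and F(x) + F(x+y) ≥ F(y) for all x, y ∈ G. For an integer k, say that H(k) holds if for all x, y, z ∈ G: F(x+y)^(1/2^k) + F(y+z)^(1/2^k) + F(z+x)^(1/2^k) ≤ F(x)^(1/2^k) + F(y)^(1/2^k) + F(z)^(1/2^k) + F(x+y+z)^(1/2^k). If H(k₀) holds for some integer k₀ ≥ −1, then H(k) holds for every integer k ≥ k₀. -/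
lemma hl_step {a b c s u v w : ℝ} (ha : 0 ≤ a) (hb : 0 ≤ b) (hc : 0 ≤ c) (hs : 0 ≤ s)
    (h : u ^ 2 + v ^ 2 + w ^ 2 ≤ a ^ 2 + b ^ 2 + c ^ 2 + s ^ 2)
    (h1 : u ≤ a + b) (h2 : v ≤ b + c) (h3 : w ≤ c + a)
    (h4 : u ≤ c + s) (h5 : v ≤ a + s) (h6 : w ≤ b + s) :
    u + v + w ≤ a + b + c + s := by
  have e1 := mul_nonneg (sub_nonneg.2 h1) (sub_nonneg.2 h4)
  have e2 := mul_nonneg (sub_nonneg.2 h2) (sub_nonneg.2 h5)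
  have e3 := mul_nonneg (sub_nonneg.2 h3) (sub_nonneg.2 h6)
  rcases eq_or_lt_of_le (show 0 ≤ a + b + c + s by positivity) with h0 | h0
  · linarith
  · have : 0 ≤ (a + b + c + s - (u + v + w)) * (a + b + c + s) := by nlinarith
    have := nonneg_of_mul_nonneg_left this h0
    linarith

lemma rpow_sub {a b c p : ℝ} (ha : 0 ≤ a) (hb : 0 ≤ b) (hc : 0 ≤ c) (hp : 0 ≤ p) (hp1 : p ≤ 1)
    (h : c ≤ a + b) : c ^ p ≤ a ^ p + b ^ p :=
  (Real.rpow_le_rpow hc h hp).trans (Real.rpow_add_le_add_rpow ha hb hp hp1)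

theorem hlawka_power_strong_subadditive {G : Type*} [AddCommSemigroup G]
    (F : G → ℝ) (hF0 : ∀ x : G, 0 ≤ F x)
    (hsub : ∀ x y : G, F (x + y) ≤ F x + F y)
    (hsub' : ∀ x y : G, F y ≤ F x + F (x + y))
    (k₀ : ℤ) (hk₀ : -1 ≤ k₀)
    (hH : ∀ x y z : G,
      F (x + y) ^ (1 / (2 : ℝ) ^ k₀) + F (y + z) ^ (1 / (2 : ℝ) ^ k₀)
          + F (z + x) ^ (1 / (2 : ℝ) ^ k₀)
        ≤ F x ^ (1 / (2 : ℝ) ^ k₀) + F y ^ (1 / (2 : ℝ) ^ k₀)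
          + F z ^ (1 / (2 : ℝ) ^ k₀) + F (x + y + z) ^ (1 / (2 : ℝ) ^ k₀)) :
    ∀ k : ℤ, k₀ ≤ k → ∀ x y z : G,
      F (x + y) ^ (1 / (2 : ℝ) ^ k) + F (y + z) ^ (1 / (2 : ℝ) ^ k)
          + F (z + x) ^ (1 / (2 : ℝ) ^ k)
        ≤ F x ^ (1 / (2 : ℝ) ^ k) + F y ^ (1 / (2 : ℝ) ^ k)
          + F z ^ (1 / (2 : ℝ) ^ k) + F (x + y + z) ^ (1 / (2 : ℝ) ^ k) := by
  intro k hk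
  induction k, hk using Int.le_induction with
  | base => exact hH
  | succ k hk ih =>
    intro x y z
    have key : ∀ t : ℝ, 0 ≤ t →
        t ^ (1 / (2 : ℝ) ^ k) = (t ^ (1 / (2 : ℝ) ^ (k + 1))) ^ 2 := by
      intro t ht
      rw [← Real.rpow_natCast, ← Real.rpow_mul ht, zpow_add_one₀ (by norm_num)]
      congr 1
      field_simp
      norm_num
    have hp : 0 ≤ 1 / (2 : ℝ) ^ (k + 1) := by positivity
    have hp1 : 1 / (2 : ℝ) ^ (k + 1) ≤ 1 := by
      rw [div_le_one (by positivity)]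
      exact one_le_zpow₀ (by norm_num) (by omega)
    have h := ih x y z
    simp only [key _ (hF0 _)] at h
    have R : ∀ i j l : G, F l ≤ F i + F j → F l ^ (1 / (2 : ℝ) ^ (k + 1)) ≤
        F i ^ (1 / (2 : ℝ) ^ (k + 1)) + F j ^ (1 / (2 : ℝ) ^ (k + 1)) :=
      fun i j l => rpow_sub (hF0 i) (hF0 j) (hF0 l) hp hp1
    have N : ∀ i : G, 0 ≤ F i ^ (1 / (2 : ℝ) ^ (k + 1)) := fun i => Real.rpow_nonneg (hF0 i) _
    refine hl_step (N _) (N _) (N _) (N _) h (R _ _ _ (hsub _ _)) (R _ _ _ (hsub _ _))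
      (R _ _ _ (hsub _ _)) (R _ _ _ ?_) (R _ _ _ ?_) (R _ _ _ ?_)
    · have := hsub' z (x + y)
      rwa [add_comm z (x + y)] at this
    · have := hsub' x (y + z)
      rwa [← add_assoc] at this
    · have := hsub' y (z + x)
      rwa [show y + (z + x) = x + y + z by ac_rfl] at this
end

section
/- Let G be an abelian (additive) semigroup and F : G → ℝ a nonnegative function that is superadditive, i.e. F(x) + F(y) ≤ F(x+y) for all x, y ∈ G. For an integer k, say that H(k) holds if for all x, y, z ∈ G: F(x+y)^(1/2^k) + F(y+z)^(1/2^k) + F(z+x)^(1/2^k) ≤ F(x)^(1/2^k) + F(y)^(1/2^k) + F(z)^(1/2^k) + F(x+y+z)^(1/2^k). If H(k₀) holds for some integer k₀ ≤ 0, then H(k) holds for every integer k ≤ k₀. -/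
theorem hlawka_sq_step (a b c u v w s : ℝ) (ha : 0 ≤ a) (hb : 0 ≤ b) (hc : 0 ≤ c)
    (hu : a + b ≤ u) (hv : b + c ≤ v) (hw : c + a ≤ w)
    (h : u + v + w ≤ a + b + c + s) :
    u ^ 2 + v ^ 2 + w ^ 2 ≤ a ^ 2 + b ^ 2 + c ^ 2 + s ^ 2 := by
  obtain ⟨p, rfl⟩ : ∃ p, u = a + b + p := ⟨u - (a + b), by ring⟩
  obtain ⟨q, rfl⟩ : ∃ q, v = b + c + q := ⟨v - (b + c), by ring⟩
  obtain ⟨r, rfl⟩ : ∃ r, w = c + a + r := ⟨w - (c + a), by ring⟩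
  have hp : 0 ≤ p := by linarith
  have hq : 0 ≤ q := by linarith
  have hr : 0 ≤ r := by linarith
  have h1 : (a + b + c + p + q + r) ^ 2 ≤ s ^ 2 :=
    pow_le_pow_left₀ (by positivity) (by linarith) 2
  have h2 : 0 ≤ 2 * (p * c + q * a + r * b + p * q + q * r + r * p) := by positivity
  nlinarith

theorem hlawka_power_superadditive {G : Type*} [AddCommSemigroup G]
    (F : G → ℝ) (hF0 : ∀ x : G, 0 ≤ F x)
    (hsuper : ∀ x y : G, F x + F y ≤ F (x + y))
    (k₀ : ℤ) (hk₀ : k₀ ≤ 0)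
    (hH : ∀ x y z : G,
      F (x + y) ^ (1 / (2 : ℝ) ^ k₀) + F (y + z) ^ (1 / (2 : ℝ) ^ k₀)
          + F (z + x) ^ (1 / (2 : ℝ) ^ k₀)
        ≤ F x ^ (1 / (2 : ℝ) ^ k₀) + F y ^ (1 / (2 : ℝ) ^ k₀)
          + F z ^ (1 / (2 : ℝ) ^ k₀) + F (x + y + z) ^ (1 / (2 : ℝ) ^ k₀)) :
    ∀ k : ℤ, k ≤ k₀ → ∀ x y z : G,
      F (x + y) ^ (1 / (2 : ℝ) ^ k) + F (y + z) ^ (1 / (2 : ℝ) ^ k)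
          + F (z + x) ^ (1 / (2 : ℝ) ^ k)
        ≤ F x ^ (1 / (2 : ℝ) ^ k) + F y ^ (1 / (2 : ℝ) ^ k)
          + F z ^ (1 / (2 : ℝ) ^ k) + F (x + y + z) ^ (1 / (2 : ℝ) ^ k) := by
  intro k hk
  induction k, hk using Int.leInductionDown with
  | base => exact hH
  | pred k hk ih =>
    intro x y z
    have hp : (1 : ℝ) ≤ 1 / (2 : ℝ) ^ k := by
      rw [one_div, ← zpow_neg]
      exact one_le_zpow₀ (by norm_num) (by omega)
    have he : 1 / (2 : ℝ) ^ (k - 1) = 1 / (2 : ℝ) ^ k * (2 : ℕ) := by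
      rw [zpow_sub_one₀ (by norm_num)]
      field_simp
      norm_num
    rw [he]
    have key : ∀ t : G, F t ^ (1 / (2 : ℝ) ^ k * (2 : ℕ)) = (F t ^ (1 / (2 : ℝ) ^ k)) ^ 2 :=
      fun t => Real.rpow_mul_natCast (hF0 t) _ 2
    simp only [key]
    have hs : ∀ x y : G, F x ^ (1 / (2 : ℝ) ^ k) + F y ^ (1 / (2 : ℝ) ^ k)
        ≤ F (x + y) ^ (1 / (2 : ℝ) ^ k) := fun x y =>
      (Real.add_rpow_le_rpow_add (hF0 x) (hF0 y) hp).trans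
        (Real.rpow_le_rpow (add_nonneg (hF0 x) (hF0 y)) (hsuper x y) (by linarith))
    exact hlawka_sq_step _ _ _ _ _ _ _ (Real.rpow_nonneg (hF0 x) _) (Real.rpow_nonneg (hF0 y) _)
      (Real.rpow_nonneg (hF0 z) _) (hs x y) (hs y z) (hs z x) (ih x y z)
end

section
/- Let (Ω, Σ, μ) be a measure space with μ a finite measure, let A, B, C ∈ Σ be measurable sets, and let k ≥ 0 be a natural number. Then μ(A)^(1/2^k) + μ(B)^(1/2^k) + μ(C)^(1/2^k) + μ(A ∪ B ∪ C)^(1/2^k) ≥ μ(A ∪ B)^(1/2^k) + μ(B ∪ C)^(1/2^k) + μ(C ∪ A)^(1/2^k), where measures are taken as real numbers. -/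
open MeasureTheory

lemma hl_step_s11 (a b c x y z u : ℝ) (ha : 0 ≤ a) (hb : 0 ≤ b) (hc : 0 ≤ c)
    (hx : 0 ≤ x) (hu : 0 ≤ u)
    (h1 : x ≤ a + b) (h2 : y ≤ b + c) (h3 : z ≤ c + a)
    (hxu : x ≤ u) (hyu : y ≤ u) (hzu : z ≤ u)
    (h : x ^ 2 + y ^ 2 + z ^ 2 ≤ a ^ 2 + b ^ 2 + c ^ 2 + u ^ 2) :
    x + y + z ≤ a + b + c + u := by
  have p1 : 0 ≤ (a + b - x) * (c + u - x) := mul_nonneg (by linarith) (by linarith)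
  have p2 : 0 ≤ (b + c - y) * (a + u - y) := mul_nonneg (by linarith) (by linarith)
  have p3 : 0 ≤ (c + a - z) * (b + u - z) := mul_nonneg (by linarith) (by linarith)
  by_contra hn
  push Not at hn
  have hS : 0 < a + b + c + u := by
    by_contra h0
    linarith
  have := mul_pos hS (sub_pos.2 hn)
  nlinarith

lemma hl_sq (t : ℝ) (ht : 0 ≤ t) (k : ℕ) :
    (t ^ (1 / (2 : ℝ) ^ (k + 1))) ^ 2 = t ^ (1 / (2 : ℝ) ^ k) := by
  rw [← Real.rpow_natCast, ← Real.rpow_mul ht]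
  congr 1
  rw [pow_succ]
  push_cast
  field_simp

lemma hl_real (a b c x y z u : ℝ) (ha : 0 ≤ a) (hb : 0 ≤ b) (hc : 0 ≤ c)
    (hx : 0 ≤ x) (hy : 0 ≤ y) (hz : 0 ≤ z) (hu : 0 ≤ u)
    (h1 : x ≤ a + b) (h2 : y ≤ b + c) (h3 : z ≤ c + a)
    (hxu : x ≤ u) (hyu : y ≤ u) (hzu : z ≤ u)
    (h : x + y + z ≤ a + b + c + u) (k : ℕ) :
    x ^ (1 / (2 : ℝ) ^ k) + y ^ (1 / (2 : ℝ) ^ k) + z ^ (1 / (2 : ℝ) ^ k)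
      ≤ a ^ (1 / (2 : ℝ) ^ k) + b ^ (1 / (2 : ℝ) ^ k) + c ^ (1 / (2 : ℝ) ^ k)
        + u ^ (1 / (2 : ℝ) ^ k) := by
  induction k with
  | zero => simpa using h
  | succ k ih =>
    have e0 : 0 ≤ 1 / (2 : ℝ) ^ (k + 1) := by positivity
    have e1 : 1 / (2 : ℝ) ^ (k + 1) ≤ 1 := by
      rw [div_le_one (by positivity)]
      exact one_le_pow₀ (by norm_num)
    have sub : ∀ p q r : ℝ, 0 ≤ p → 0 ≤ q → 0 ≤ r → r ≤ p + q →
        r ^ (1 / (2 : ℝ) ^ (k + 1)) ≤ p ^ (1 / (2 : ℝ) ^ (k + 1))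
          + q ^ (1 / (2 : ℝ) ^ (k + 1)) := fun p q r hp hq hr hh =>
      (Real.rpow_le_rpow hr hh e0).trans (Real.rpow_add_le_add_rpow hp hq e0 e1)
    apply hl_step_s11
    any_goals apply Real.rpow_nonneg; assumption
    any_goals apply sub <;> assumption
    any_goals apply Real.rpow_le_rpow <;> assumption
    rw [hl_sq x hx, hl_sq y hy, hl_sq z hz, hl_sq a ha, hl_sq b hb, hl_sq c hc, hl_sq u hu]
    exact ih

theorem hlawka_measure_union {Ω : Type*} [MeasurableSpace Ω]
    (μ : Measure Ω) [IsFiniteMeasure μ]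
    (A B C : Set Ω) (hA : MeasurableSet A) (hB : MeasurableSet B)
    (hC : MeasurableSet C) (k : ℕ) :
    (μ (A ∪ B)).toReal ^ (1 / (2 : ℝ) ^ k) + (μ (B ∪ C)).toReal ^ (1 / (2 : ℝ) ^ k)
        + (μ (C ∪ A)).toReal ^ (1 / (2 : ℝ) ^ k)
      ≤ (μ A).toReal ^ (1 / (2 : ℝ) ^ k) + (μ B).toReal ^ (1 / (2 : ℝ) ^ k)
        + (μ C).toReal ^ (1 / (2 : ℝ) ^ k)
        + (μ (A ∪ B ∪ C)).toReal ^ (1 / (2 : ℝ) ^ k) := by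
  have mono : ∀ s t : Set Ω, s ⊆ t → (μ s).toReal ≤ (μ t).toReal := fun s t h =>
    measureReal_mono (μ := μ) h
  have sub : ∀ s t : Set Ω, (μ (s ∪ t)).toReal ≤ (μ s).toReal + (μ t).toReal := fun s t =>
    measureReal_union_le (μ := μ) s t
  apply hl_real
  any_goals exact ENNReal.toReal_nonneg
  any_goals apply sub
  any_goals
    apply mono
    intro w
    simp only [Set.mem_union]
    tauto
  have i1 : (μ (A ∪ B ∪ C)).toReal + (μ ((A ∪ B) ∩ C)).toReal
      = (μ (A ∪ B)).toReal + (μ C).toReal := measureReal_union_add_inter (μ := μ) hC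
  have i2 : (μ (B ∪ C)).toReal + (μ (B ∩ C)).toReal
      = (μ B).toReal + (μ C).toReal := measureReal_union_add_inter (μ := μ) hC
  have i3 : (μ (C ∪ A)).toReal + (μ (C ∩ A)).toReal
      = (μ C).toReal + (μ A).toReal := measureReal_union_add_inter (μ := μ) hA
  have i4 : (μ ((A ∪ B) ∩ C)).toReal ≤ (μ (C ∩ A)).toReal + (μ (B ∩ C)).toReal := by
    refine (mono _ ((C ∩ A) ∪ (B ∩ C)) ?_).trans (sub _ _)
    intro w
    simp only [Set.mem_union, Set.mem_inter_iff]
    tauto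
  linarith
end

section
/- Let (Ω, Σ, μ) be a measure space with μ a finite measure, let A, B, C ∈ Σ be measurable sets, let Δ denote symmetric difference of sets, and let k ≥ 0 be a natural number. Then μ(A)^(1/2^k) + μ(B)^(1/2^k) + μ(C)^(1/2^k) + μ(A Δ B Δ C)^(1/2^k) ≥ μ(A Δ B)^(1/2^k) + μ(B Δ C)^(1/2^k) + μ(C Δ A)^(1/2^k), where measures are taken as real numbers. -/
open MeasureTheory

lemma hlawka_aux_symm {Ω : Type*} [MeasurableSpace Ω]
    (μ : Measure Ω) [IsFiniteMeasure μ]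
    (A B : Set Ω) (hA : MeasurableSet A) (hB : MeasurableSet B) :
    μ.real (symmDiff A B) = μ.real A + μ.real B - 2 * μ.real (A ∩ B) := by
  have h1 := measureReal_symmDiff_eq (μ := μ) hA hB
  have h2 := measureReal_inter_add_sdiff (μ := μ) (s := A) hB
  have h3 := measureReal_inter_add_sdiff (μ := μ) (s := B) hA
  rw [Set.inter_comm B A] at h3
  linarith

lemma hlawka_aux_step (a b c d x y z : ℝ) (ha : 0 ≤ a) (hb : 0 ≤ b) (hc : 0 ≤ c) (hd : 0 ≤ d)
    (h : x ^ 2 + y ^ 2 + z ^ 2 ≤ a ^ 2 + b ^ 2 + c ^ 2 + d ^ 2)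
    (h1 : x ≤ a + b) (h2 : x ≤ c + d) (h3 : y ≤ b + c) (h4 : y ≤ a + d)
    (h5 : z ≤ c + a) (h6 : z ≤ b + d) : x + y + z ≤ a + b + c + d := by
  have e1 := mul_nonneg (sub_nonneg.2 h1) (sub_nonneg.2 h2)
  have e2 := mul_nonneg (sub_nonneg.2 h3) (sub_nonneg.2 h4)
  have e3 := mul_nonneg (sub_nonneg.2 h5) (sub_nonneg.2 h6)
  have key : 0 ≤ (a + b + c + d - (x + y + z)) * (a + b + c + d) := by nlinarith
  rcases (by positivity : 0 ≤ a + b + c + d).eq_or_lt with h0 | h0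
  · linarith
  · have := nonneg_of_mul_nonneg_left key h0
    linarith

lemma hlawka_aux_tri {Ω : Type*} [MeasurableSpace Ω]
    (μ : Measure Ω) [IsFiniteMeasure μ] (X Y Z : Set Ω) (h : Z ⊆ X ∪ Y) (k : ℕ) :
    μ.real Z ^ (1 / (2 : ℝ) ^ k) ≤ μ.real X ^ (1 / (2 : ℝ) ^ k) + μ.real Y ^ (1 / (2 : ℝ) ^ k) := by
  have h1 : μ.real Z ≤ μ.real X + μ.real Y :=
    (measureReal_mono h).trans (measureReal_union_le X Y)
  have hp1 : 1 / (2 : ℝ) ^ k ≤ 1 := by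
    rw [div_le_one (by positivity)]
    exact one_le_pow₀ (by norm_num)
  exact (Real.rpow_le_rpow measureReal_nonneg h1 (by positivity)).trans
    (Real.rpow_add_le_add_rpow measureReal_nonneg measureReal_nonneg (by positivity) hp1)

lemma hlawka_aux_sq (r : ℝ) (hr : 0 ≤ r) (k : ℕ) :
    (r ^ (1 / (2 : ℝ) ^ (k + 1))) ^ 2 = r ^ (1 / (2 : ℝ) ^ k) := by
  rw [← Real.rpow_natCast, ← Real.rpow_mul hr]
  congr 1
  push_cast
  field_simp
  ring

theorem hlawka_measure_symmDiff {Ω : Type*} [MeasurableSpace Ω]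
    (μ : Measure Ω) [IsFiniteMeasure μ]
    (A B C : Set Ω) (hA : MeasurableSet A) (hB : MeasurableSet B)
    (hC : MeasurableSet C) (k : ℕ) :
    (μ (symmDiff A B)).toReal ^ (1 / (2 : ℝ) ^ k) + (μ (symmDiff B C)).toReal ^ (1 / (2 : ℝ) ^ k)
        + (μ (symmDiff C A)).toReal ^ (1 / (2 : ℝ) ^ k)
      ≤ (μ A).toReal ^ (1 / (2 : ℝ) ^ k) + (μ B).toReal ^ (1 / (2 : ℝ) ^ k)
        + (μ C).toReal ^ (1 / (2 : ℝ) ^ k)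
        + (μ (symmDiff (symmDiff A B) C)).toReal ^ (1 / (2 : ℝ) ^ k) := by
  simp only [← measureReal_def]
  induction k with
  | zero =>
    simp only [pow_zero, div_one, Real.rpow_one]
    have e : symmDiff A B ∩ C = symmDiff (A ∩ C) (B ∩ C) := by
      ext w
      simp only [Set.mem_symmDiff, Set.mem_inter_iff]
      tauto
    rw [hlawka_aux_symm μ (symmDiff A B) C (hA.symmDiff hB) hC, e,
      hlawka_aux_symm μ (A ∩ C) (B ∩ C) (hA.inter hC) (hB.inter hC),
      hlawka_aux_symm μ A B hA hB, hlawka_aux_symm μ B C hB hC, hlawka_aux_symm μ C A hC hA,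
      Set.inter_comm C A]
    have := measureReal_nonneg (μ := μ) (s := A ∩ C ∩ (B ∩ C))
    linarith
  | succ k ih =>
    apply hlawka_aux_step
    · positivity
    · positivity
    · positivity
    · positivity
    · simpa only [hlawka_aux_sq _ measureReal_nonneg] using ih
    all_goals
      apply hlawka_aux_tri
      intro w
      simp only [Set.mem_symmDiff, Set.mem_union]
      tauto
end

section
/- Let G be an abelian group and x ↦ |x| a nonnegative, symmetric and subadditive function on G, i.e. |x| ≥ 0, |−x| = |x| and |x| + |y| ≥ |x+y| for all x, y ∈ G. Let S : ℝ → ℝ be concave on [0, ∞) and nonnegative on [0, ∞). Suppose that for all x, y, z ∈ G: S(|x+y|)² + S(|y+z|)² + S(|z+x|)² ≤ S(|x|)² + S(|y|)² + S(|z|)² + S(|x+y+z|)². Then for all x, y, z ∈ G: S(|x+y|) + S(|y+z|) + S(|z+x|) ≤ S(|x|) + S(|y|) + S(|z|) + S(|x+y+z|). -/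
theorem aux_mono (S : ℝ → ℝ) (hconc : ConcaveOn ℝ (Set.Ici (0 : ℝ)) S)
    (hS0 : ∀ t : ℝ, 0 ≤ t → 0 ≤ S t) (u v : ℝ) (hu : 0 ≤ u) (huv : u ≤ v) : S u ≤ S v := by
  by_contra! hlt
  have hv : 0 ≤ v := hu.trans huv
  have hSv := hS0 v hv
  have hd : 0 < S u - S v := by linarith
  have hn : 0 < (v - u) * S v + 1 := by
    have := mul_nonneg (sub_nonneg.2 huv) hSv
    linarith
  obtain ⟨t, ht⟩ : ∃ t, t = ((v - u) * S v + 1) / (S u - S v) := ⟨_, rfl⟩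
  have htp : 0 < t := by rw [ht]; exact div_pos hn hd
  have hte : t * (S u - S v) = (v - u) * S v + 1 := by
    rw [ht]; exact div_mul_cancel₀ _ hd.ne'
  have hD : 0 < v - u + t := by linarith
  have hw : 0 ≤ v + t := by linarith
  have h := hconc.2 (Set.mem_Ici.2 hu) (Set.mem_Ici.2 hw)
    (show 0 ≤ t / (v - u + t) by positivity)
    (show 0 ≤ (v - u) / (v - u + t) from div_nonneg (sub_nonneg.2 huv) hD.le)
    (by field_simp; ring)
  have e : (t / (v - u + t)) • u + ((v - u) / (v - u + t)) • (v + t) = v := by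
    simp only [smul_eq_mul]; field_simp; ring
  rw [e] at h
  simp only [smul_eq_mul] at h
  have h2 : 0 ≤ (v - u) / (v - u + t) * S (v + t) :=
    mul_nonneg (div_nonneg (sub_nonneg.2 huv) hD.le) (hS0 _ hw)
  have h3 : t / (v - u + t) * S u ≤ S v := by linarith
  rw [div_mul_eq_mul_div, div_le_iff₀ hD] at h3
  nlinarith

theorem aux_sub (S : ℝ → ℝ) (hconc : ConcaveOn ℝ (Set.Ici (0 : ℝ)) S)
    (hS0 : ∀ t : ℝ, 0 ≤ t → 0 ≤ S t) (a b : ℝ) (ha : 0 ≤ a) (hb : 0 ≤ b) :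
    S (a + b) ≤ S a + S b := by
  rcases (add_nonneg ha hb).eq_or_lt with h0 | hp
  · have : a = 0 := by linarith
    subst this
    have := hS0 0 le_rfl
    simpa using this
  · have key : ∀ c d : ℝ, 0 ≤ c → 0 ≤ d → 0 < c + d → c / (c + d) * S (c + d) ≤ S c := by
      intro c d hc hd hcd
      have h := hconc.2 (Set.mem_Ici.2 hcd.le) (Set.mem_Ici.2 (le_refl (0 : ℝ)))
        (show 0 ≤ c / (c + d) by positivity) (show 0 ≤ d / (c + d) by positivity)
        (by field_simp)
      have e : (c / (c + d)) • (c + d) + (d / (c + d)) • (0 : ℝ) = c := by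
        simp only [smul_eq_mul]; field_simp; ring
      rw [e] at h
      simp only [smul_eq_mul] at h
      have : 0 ≤ d / (c + d) * S 0 := mul_nonneg (by positivity) (hS0 0 le_rfl)
      linarith
    have h1 := key a b ha hb hp
    have h2 := key b a hb ha (by linarith)
    rw [add_comm b a] at h2
    have e : a / (a + b) * S (a + b) + b / (a + b) * S (a + b) = S (a + b) := by
      field_simp
    linarith

theorem ressel_hlawka {G : Type*} [AddCommGroup G]
    (nm : G → ℝ) (hnm0 : ∀ x : G, 0 ≤ nm x)
    (hsymm : ∀ x : G, nm (-x) = nm x)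
    (hsub : ∀ x y : G, nm (x + y) ≤ nm x + nm y)
    (S : ℝ → ℝ) (hconc : ConcaveOn ℝ (Set.Ici (0 : ℝ)) S)
    (hS0 : ∀ t : ℝ, 0 ≤ t → 0 ≤ S t)
    (hsq : ∀ x y z : G,
      S (nm (x + y)) ^ 2 + S (nm (y + z)) ^ 2 + S (nm (z + x)) ^ 2
        ≤ S (nm x) ^ 2 + S (nm y) ^ 2 + S (nm z) ^ 2 + S (nm (x + y + z)) ^ 2) :
    ∀ x y z : G,
      S (nm (x + y)) + S (nm (y + z)) + S (nm (z + x))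
        ≤ S (nm x) + S (nm y) + S (nm z) + S (nm (x + y + z)) := by
  intro x y z
  have f0 : ∀ x, 0 ≤ S (nm x) := fun x => hS0 _ (hnm0 x)
  have fs : ∀ x y, S (nm (x + y)) ≤ S (nm x) + S (nm y) := fun x y =>
    (aux_mono S hconc hS0 _ _ (hnm0 _) (hsub x y)).trans (aux_sub S hconc hS0 _ _ (hnm0 x) (hnm0 y))
  have fd : ∀ w z, S (nm w) ≤ S (nm z) + S (nm (w + z)) := by
    intro w z
    have h := fs (-z) (w + z)
    rwa [hsymm, show -z + (w + z) = w by abel] at h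
  have p1 := fs x y
  have q1 := fs y z
  have r1 := fs z x
  have p2 := fd (x + y) z
  have q2 := fd (y + z) x
  have r2 := fd (z + x) y
  rw [show y + z + x = x + y + z by abel] at q2
  rw [show z + x + y = x + y + z by abel] at r2
  have h := hsq x y z
  have a0 := f0 x
  have b0 := f0 y
  have c0 := f0 z
  have d0 := f0 (x + y + z)
  generalize S (nm (x + y + z)) = d at *
  generalize S (nm (x + y)) = p at *
  generalize S (nm (y + z)) = q at *
  generalize S (nm (z + x)) = r at *
  generalize S (nm x) = a at *
  generalize S (nm y) = b at *
  generalize S (nm z) = c at *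
  have m1 := mul_nonneg (sub_nonneg.2 p1) (sub_nonneg.2 p2)
  have m2 := mul_nonneg (sub_nonneg.2 q1) (sub_nonneg.2 q2)
  have m3 := mul_nonneg (sub_nonneg.2 r1) (sub_nonneg.2 r2)
  have hs : 0 ≤ a + b + c + d := by linarith
  rcases hs.eq_or_lt with h0 | hp
  · linarith
  · have : 0 ≤ (a + b + c + d - (p + q + r)) * (a + b + c + d) := by nlinarith
    have := nonneg_of_mul_nonneg_left this hp
    linarith
end

section
/- Let Ω be a nonempty set, let G be an abelian group equipped with a nonnegative, symmetric and subadditive function x ↦ |x| (i.e. |x| ≥ 0, |−x| = |x|, |x| + |y| ≥ |x+y|), and let S be a linear subspace of the real-valued functions on Ω containing the constant function 1, with T : S → ℝ linear and signature-preserving (T(ζ) ≥ 0 whenever ζ(ω) ≥ 0 for all ω). Let Sc : ℝ → ℝ be concave and nonnegative on [0, ∞), let ĝ : Ω → G, and let w ∈ G. Assume the functions ω ↦ Sc(|ĝ(ω)|), ω ↦ Sc(|ĝ(ω) − w|), their pointwise squares, and their pointwise product all belong to S. Let A ∈ ℝ with A ≠ 0 and A + Sc(|w|) > 0, and assume that for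 every x ∈ Ω such that Sc(|ĝ(x)|) + Sc(|w|) ≠ Sc(|ĝ(x) − w|), one has A ≥ Sc(|ĝ(x)|) + Sc(|w − ĝ(x)|). Set C = 2·T(ω ↦ Sc(|ĝ(ω)|))/A. Then the squared Hlawka inequality (T(1) − C)·Sc(|w|)² + T(ω ↦ Sc(|ĝ(ω)|)²) ≥ T(ω ↦ Sc(|ĝ(ω) − w|)²) implies the Hlawka inequality (T(1) − C)·Sc(|w|) + T(ω ↦ Sc(|ĝ(ω)|)) ≥ T(ω ↦ Sc(|ĝ(ω) − w|)). -/
theorem hlawka_aux_mono (Sc : ℝ → ℝ) (hconc : ConcaveOn ℝ (Set.Ici (0 : ℝ)) Sc)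
    (hSc0 : ∀ t : ℝ, 0 ≤ t → 0 ≤ Sc t) (s t : ℝ) (hs : 0 ≤ s) (hst : s ≤ t) :
    Sc s ≤ Sc t := by
  by_contra hlt
  rw [not_le] at hlt
  have ht0 := hSc0 t (hs.trans hst)
  have hsp : 0 < Sc s := lt_of_le_of_lt ht0 hlt
  obtain ⟨l, hl⟩ : ∃ l, l = (Sc s - Sc t) / (2 * Sc s) := ⟨_, rfl⟩
  have hl0 : 0 < l := by rw [hl]; apply div_pos <;> linarith
  have hl1 : l ≤ 1 := by rw [hl, div_le_one (by linarith)]; linarith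
  have hls : l * Sc s = (Sc s - Sc t) / 2 := by rw [hl]; field_simp
  have hu : 0 ≤ s + (t - s) / l := add_nonneg hs (div_nonneg (by linarith) hl0.le)
  have h := hconc.2 (show s ∈ Set.Ici (0 : ℝ) from hs)
    (show s + (t - s) / l ∈ Set.Ici (0 : ℝ) from hu)
    (show 0 ≤ 1 - l by linarith) hl0.le (by ring)
  have he : (1 - l) • s + l • (s + (t - s) / l) = t := by
    simp only [smul_eq_mul]; field_simp; ring
  rw [he] at h
  simp only [smul_eq_mul] at h
  have := mul_nonneg hl0.le (hSc0 _ hu)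
  nlinarith

theorem hlawka_aux_sub (Sc : ℝ → ℝ) (hconc : ConcaveOn ℝ (Set.Ici (0 : ℝ)) Sc)
    (hSc0 : ∀ t : ℝ, 0 ≤ t → 0 ≤ Sc t) (x y : ℝ) (hx : 0 ≤ x) (hy : 0 ≤ y) :
    Sc (x + y) ≤ Sc x + Sc y := by
  have h0 := hSc0 0 le_rfl
  rcases (add_nonneg hx hy).eq_or_lt with h | h
  · have hx' : x = 0 := by linarith
    have hy' : y = 0 := by linarith
    subst hx' hy'
    simpa using h0
  · have key : ∀ p q : ℝ, 0 ≤ p → 0 ≤ q → p + q = x + y →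
        p / (x + y) * Sc (x + y) ≤ Sc p := by
      intro p q hp hq hpq
      have hc := hconc.2 (show x + y ∈ Set.Ici (0 : ℝ) from h.le)
        (show (0 : ℝ) ∈ Set.Ici (0 : ℝ) from le_refl (0 : ℝ))
        (show 0 ≤ p / (x + y) by positivity) (show 0 ≤ q / (x + y) by positivity)
        (by rw [← add_div, hpq, div_self h.ne'])
      have he : (p / (x + y)) • (x + y) + (q / (x + y)) • (0 : ℝ) = p := by
        simp only [smul_eq_mul]; field_simp; ring
      rw [he] at hc
      simp only [smul_eq_mul] at hc
      have : 0 ≤ q / (x + y) * Sc 0 := by positivity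
      linarith
    have k1 := key x y hx hy rfl
    have k2 := key y x hy hx (add_comm _ _)
    have : x / (x + y) * Sc (x + y) + y / (x + y) * Sc (x + y) = Sc (x + y) := by
      field_simp
    linarith

theorem hlawka_group_operator {Ω G : Type*} [Nonempty Ω] [AddCommGroup G]
    (nm : G → ℝ) (hnm0 : ∀ x : G, 0 ≤ nm x)
    (hsymm : ∀ x : G, nm (-x) = nm x)
    (hsub : ∀ x y : G, nm (x + y) ≤ nm x + nm y)
    (S : Submodule ℝ (Ω → ℝ)) (h1 : (1 : Ω → ℝ) ∈ S)
    (T : S →ₗ[ℝ] ℝ)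
    (hT : ∀ ζ : S, (∀ ω : Ω, 0 ≤ (ζ : Ω → ℝ) ω) → 0 ≤ T ζ)
    (Sc : ℝ → ℝ) (hconc : ConcaveOn ℝ (Set.Ici (0 : ℝ)) Sc)
    (hSc0 : ∀ t : ℝ, 0 ≤ t → 0 ≤ Sc t)
    (g : Ω → G) (w : G)
    (hg : (fun ω => Sc (nm (g ω))) ∈ S)
    (hgw : (fun ω => Sc (nm (g ω - w))) ∈ S)
    (hg2 : (fun ω => Sc (nm (g ω)) ^ 2) ∈ S)
    (hgw2 : (fun ω => Sc (nm (g ω - w)) ^ 2) ∈ S)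
    (hprod : (fun ω => Sc (nm (g ω)) * Sc (nm (g ω - w))) ∈ S)
    (A : ℝ) (hA : A ≠ 0) (hAw : 0 < A + Sc (nm w))
    (hctrl : ∀ x : Ω, Sc (nm (g x)) + Sc (nm w) ≠ Sc (nm (g x - w)) →
      Sc (nm (g x)) + Sc (nm (w - g x)) ≤ A) :
    (T ⟨1, h1⟩ - 2 * T ⟨fun ω => Sc (nm (g ω)), hg⟩ / A) * Sc (nm w) ^ 2
        + T ⟨fun ω => Sc (nm (g ω)) ^ 2, hg2⟩
      ≥ T ⟨fun ω => Sc (nm (g ω - w)) ^ 2, hgw2⟩ →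
    (T ⟨1, h1⟩ - 2 * T ⟨fun ω => Sc (nm (g ω)), hg⟩ / A) * Sc (nm w)
        + T ⟨fun ω => Sc (nm (g ω)), hg⟩
      ≥ T ⟨fun ω => Sc (nm (g ω - w)), hgw⟩ := by
  intro hsq
  have hp : ∀ x, Sc (nm (g x - w)) ≤ Sc (nm (g x)) + Sc (nm w) := by
    intro x
    have h2 : nm (g x - w) ≤ nm (g x) + nm w := by
      have := hsub (g x) (-w)
      rwa [hsymm, ← sub_eq_add_neg] at this
    exact (hlawka_aux_mono Sc hconc hSc0 _ _ (hnm0 _) h2).trans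
      (hlawka_aux_sub Sc hconc hSc0 _ _ (hnm0 _) (hnm0 _))
  have hs : ∀ x, nm (w - g x) = nm (g x - w) := by
    intro x
    rw [← hsymm, neg_sub]
  have hpt : ∀ x, 0 ≤ (A - Sc (nm (g x)) - Sc (nm (g x - w))) *
      (Sc (nm (g x)) + Sc (nm w) - Sc (nm (g x - w))) := by
    intro x
    by_cases h : Sc (nm (g x)) + Sc (nm w) = Sc (nm (g x - w))
    · rw [h]; simp
    · have := hctrl x h
      rw [hs] at this
      exact mul_nonneg (by linarith) (by linarith [hp x])
  have hmain := hT ((A - Sc (nm w)) • (⟨_, hg⟩ : S) + (A * Sc (nm w)) • (⟨1, h1⟩ : S)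
    - (A + Sc (nm w)) • (⟨_, hgw⟩ : S) - ⟨_, hg2⟩ + ⟨_, hgw2⟩) (by
      intro x
      have := hpt x
      simp only [Submodule.coe_add, Submodule.coe_sub, Submodule.coe_smul, Pi.add_apply,
        Pi.sub_apply, Pi.smul_apply, smul_eq_mul, Pi.one_apply]
      nlinarith)
  simp only [map_add, map_sub, map_smul, smul_eq_mul] at hmain
  generalize T ⟨fun ω => Sc (nm (g ω)), hg⟩ = a at *
  generalize T ⟨fun ω => Sc (nm (g ω - w)), hgw⟩ = b at *
  generalize T ⟨fun ω => Sc (nm (g ω)) ^ 2, hg2⟩ = a2 at *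
  generalize T ⟨fun ω => Sc (nm (g ω - w)) ^ 2, hgw2⟩ = b2 at *
  generalize T ⟨1, h1⟩ = e at *
  generalize Sc (nm w) = c at *
  obtain ⟨C, hC⟩ : ∃ C, C = 2 * a / A := ⟨_, rfl⟩
  have hAC : A * C = 2 * a := by rw [hC]; field_simp
  rw [← hC] at hsq ⊢
  have : 0 ≤ (A + c) * ((e - C) * c + a - b) := by
    have : (A + c) * ((e - C) * c + a - b) = A * e * c - (A * C) * c + A * a - A * b
      + (e - C) * c ^ 2 + c * a - c * b := by ring
    rw [this, hAC]
    linarith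
  have := nonneg_of_mul_nonneg_right this hAw
  linarith
end

section
/- Let Ω be a nonempty set, H a real inner product space with inner product ⟨·,·⟩ and induced norm ‖·‖, and T a linear signature-preserving functional (T(ζ) ≥ 0 whenever ζ(ω) ≥ 0 for all ω) defined on a linear subspace S of the real-valued functions on Ω containing the constant function 1. Let f : Ω → H and w ∈ H satisfy: (i) for every a ∈ H the function ω ↦ ⟨f(ω), a⟩ belongs to S and T(ω ↦ ⟨f(ω), a⟩) = ⟨w, a⟩; (ii) the functions ω ↦ ‖f(ω)‖, ω ↦ ‖f(ω) − w‖, ω ↦ ‖f(ω)‖², and ω ↦ ‖f(ω) − w‖² belong to S, together with the pointwise product of ω ↦ ‖f(ω)‖ and ω ↦ ‖f(ω) − w‖; (iii) T(ω ↦ ‖f(ω)‖) > 0; and (iv) for every x ∈ Ω such that there is no α ≥ 0 with −f(x) = α·w, one has T(ω ↦ ‖f(ω)‖) ≥ ‖f(x)‖ + ‖w − f(x)‖. Then (T(1) − 2)·‖w‖ + T(ω ↦ ‖f(ω)‖) ≥ T(ω ↦ ‖f(ω) − w‖). -/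
open RealInnerProductSpace

theorem hlawka_inner_operator {Ω H : Type*} [Nonempty Ω]
    [NormedAddCommGroup H] [InnerProductSpace ℝ H]
    (S : Submodule ℝ (Ω → ℝ)) (h1 : (1 : Ω → ℝ) ∈ S)
    (T : S →ₗ[ℝ] ℝ)
    (hT : ∀ ζ : S, (∀ ω : Ω, 0 ≤ (ζ : Ω → ℝ) ω) → 0 ≤ T ζ)
    (f : Ω → H) (w : H)
    (hinner : ∀ a : H, (fun ω => ⟪f ω, a⟫) ∈ S)
    (hTinner : ∀ a : H, T ⟨fun ω => ⟪f ω, a⟫, hinner a⟩ = ⟪w, a⟫)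
    (hnf : (fun ω => ‖f ω‖) ∈ S)
    (hnfw : (fun ω => ‖f ω - w‖) ∈ S)
    (hnf2 : (fun ω => ‖f ω‖ ^ 2) ∈ S)
    (hnfw2 : (fun ω => ‖f ω - w‖ ^ 2) ∈ S)
    (hprod : (fun ω => ‖f ω‖ * ‖f ω - w‖) ∈ S)
    (hpos : 0 < T ⟨fun ω => ‖f ω‖, hnf⟩)
    (hctrl : ∀ x : Ω, (¬ ∃ α : ℝ, 0 ≤ α ∧ -f x = α • w) →
      ‖f x‖ + ‖w - f x‖ ≤ T ⟨fun ω => ‖f ω‖, hnf⟩) :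
    (T ⟨1, h1⟩ - 2) * ‖w‖ + T ⟨fun ω => ‖f ω‖, hnf⟩
      ≥ T ⟨fun ω => ‖f ω - w‖, hnfw⟩ := by
  set N := T ⟨fun ω => ‖f ω‖, hnf⟩ with hN
  set B := T ⟨fun ω => ‖f ω - w‖, hnfw⟩ with hB
  have key := hT (N • ((⟨fun ω => ‖f ω‖, hnf⟩ : S) + ‖w‖ • (⟨1, h1⟩ : S)
      - (⟨fun ω => ‖f ω - w‖, hnfw⟩ : S))
      - ((2 : ℝ) • (⟨fun ω => ⟪f ω, w⟫, hinner w⟩ : S) - (‖w‖ ^ 2) • (⟨1, h1⟩ : S)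
        + ‖w‖ • (⟨fun ω => ‖f ω‖, hnf⟩ : S) + ‖w‖ • (⟨fun ω => ‖f ω - w‖, hnfw⟩ : S))) (by
    intro x
    have e : ‖f x - w‖ ^ 2 = ‖f x‖ ^ 2 - 2 * ⟪f x, w⟫ + ‖w‖ ^ 2 := norm_sub_sq_real _ _
    have m : 0 ≤ (‖f x‖ + ‖w‖ - ‖f x - w‖) * (N - ‖f x‖ - ‖f x - w‖) := by
      by_cases h : ∃ α : ℝ, 0 ≤ α ∧ -f x = α • w
      · obtain ⟨α, h0, h⟩ := h
        have ha : ‖f x‖ = α * ‖w‖ := by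
          rw [← norm_neg, h, norm_smul, Real.norm_of_nonneg h0]
        have hb : ‖f x - w‖ = (α + 1) * ‖w‖ := by
          have : f x - w = -((α + 1) • w) := by
            rw [add_smul, ← h, one_smul]; abel
          rw [this, norm_neg, norm_smul, Real.norm_of_nonneg (by linarith)]
        rw [ha, hb]
        apply le_of_eq
        ring
      · have h2 := hctrl x h
        rw [norm_sub_rev w] at h2
        exact mul_nonneg (by linarith [norm_sub_le (f x) w]) (by linarith)
    simp only [Submodule.coe_sub, Submodule.coe_add, Submodule.coe_smul, Pi.sub_apply,
      Pi.add_apply, Pi.smul_apply, smul_eq_mul, Pi.one_apply]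
    nlinarith [m, e])
  simp only [map_sub, map_add, map_smul, smul_eq_mul, hTinner, ← hN, ← hB,
    real_inner_self_eq_norm_sq] at key
  have hc := norm_nonneg w
  have : 0 ≤ (N + ‖w‖) * ((T ⟨1, h1⟩ - 2) * ‖w‖ + N - B) := by nlinarith [key]
  have := nonneg_of_mul_nonneg_right this (by linarith)
  linarith
end

section
/- Let (Ω, μ) be a finite measure space, let H be a real Hilbert space, and let f, g : Ω → H be Bochner integrable functions with ∫_Ω ‖f‖ dμ ≠ 0, ∫_Ω ‖g‖ dμ ≠ 0, and (∫_Ω f dμ)/(∫_Ω ‖f‖ dμ) = (∫_Ω g dμ)/(∫_Ω ‖g‖ dμ). Assume that for every x ∈ Ω such that there is no α ≥ 0 with −g(x) = α·∫_Ω f dμ, one has ∫_Ω ‖f‖ dμ ≥ ‖g(x)‖ + ‖g(x) − ∫_Ω f dμ‖. Then (μ(Ω) − C)·‖∫_Ω f dμ‖ + ∫_Ω ‖g‖ dμ ≥ ∫_Ω ‖g(ω) − ∫_Ω f dμ‖ dμ(ω), where C = 2·(∫_Ω ‖g‖ dμ)/(∫_Ω ‖f‖ dμ). -/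
open MeasureTheory

theorem hlawka_integral_two_functions {Ω H : Type*} [MeasurableSpace Ω]
    (μ : Measure Ω) [IsFiniteMeasure μ]
    [NormedAddCommGroup H] [InnerProductSpace ℝ H] [CompleteSpace H]
    (f g : Ω → H) (hf : Integrable f μ) (hg : Integrable g μ)
    (hnf : (∫ ω, ‖f ω‖ ∂μ) ≠ 0) (hng : (∫ ω, ‖g ω‖ ∂μ) ≠ 0)
    (hratio : (∫ ω, ‖f ω‖ ∂μ)⁻¹ • (∫ ω, f ω ∂μ)
      = (∫ ω, ‖g ω‖ ∂μ)⁻¹ • (∫ ω, g ω ∂μ))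
    (hctrl : ∀ x : Ω, (¬ ∃ α : ℝ, 0 ≤ α ∧ -g x = α • (∫ ω, f ω ∂μ)) →
      ‖g x‖ + ‖g x - ∫ ω, f ω ∂μ‖ ≤ ∫ ω, ‖f ω‖ ∂μ) :
    ((μ Set.univ).toReal - 2 * (∫ ω, ‖g ω‖ ∂μ) / (∫ ω, ‖f ω‖ ∂μ))
        * ‖∫ ω, f ω ∂μ‖ + ∫ ω, ‖g ω‖ ∂μ
      ≥ ∫ ω, ‖g ω - ∫ ω', f ω' ∂μ‖ ∂μ := by
  have hA : 0 < ∫ ω, ‖f ω‖ ∂μ :=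
    lt_of_le_of_ne (integral_nonneg fun _ => norm_nonneg _) (Ne.symm hnf)
  generalize hAd : (∫ ω, ‖f ω‖ ∂μ) = A at *
  generalize (∫ ω, f ω ∂μ) = F at *
  generalize hB : (∫ ω, ‖g ω‖ ∂μ) = B at *
  have hG : (∫ ω, g ω ∂μ) = (B / A) • F := by
    rw [div_eq_mul_inv, mul_smul, hratio, smul_smul, mul_inv_cancel₀ hng, one_smul]
  have hpt : ∀ x, 2 * ‖F‖ * ‖g x‖ + 2 * inner ℝ F (g x)
      ≤ (A + ‖F‖) * (‖F‖ + ‖g x‖ - ‖g x - F‖) := by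
    intro x
    have h1 : ‖g x - F‖ ^ 2 = ‖g x‖ ^ 2 - 2 * inner ℝ (g x) F + ‖F‖ ^ 2 :=
      norm_sub_sq_real _ _
    rw [real_inner_comm] at h1
    by_cases hx : ∃ α : ℝ, 0 ≤ α ∧ -g x = α • F
    · obtain ⟨α, hα, hx⟩ := hx
      have hgx : g x = -(α • F) := by rw [← hx, neg_neg]
      have h2 : ‖g x‖ = α * ‖F‖ := by
        rw [hgx, norm_neg, norm_smul, Real.norm_of_nonneg hα]
      have h3 : g x - F = -((α + 1) • F) := by rw [hgx, add_smul, one_smul]; abel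
      have h4 : ‖g x - F‖ = (α + 1) * ‖F‖ := by
        rw [h3, norm_neg, norm_smul, Real.norm_of_nonneg (by linarith)]
      have h5 : inner ℝ F (g x) = -(α * ‖F‖ ^ 2) := by
        rw [hgx, inner_neg_right, inner_smul_right, real_inner_self_eq_norm_sq]
      rw [h2, h4, h5]
      apply le_of_eq
      ring
    · have h2 := hctrl x hx
      have h3 : ‖g x - F‖ ≤ ‖g x‖ + ‖F‖ := norm_sub_le _ _
      nlinarith [mul_nonneg (sub_nonneg.2 h2) (sub_nonneg.2 h3)]
  have hi1 : Integrable (fun x => ‖g x - F‖) μ := (hg.sub (integrable_const F)).norm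
  have hi2 : Integrable (fun x => inner ℝ F (g x)) μ := hg.const_inner F
  have hi3 : Integrable (fun x => ‖F‖ + ‖g x‖) μ := (integrable_const _).add hg.norm
  have hint := integral_mono ((hg.norm.const_mul (2 * ‖F‖)).add (hi2.const_mul 2))
    ((hi3.sub hi1).const_mul (A + ‖F‖)) hpt
  simp only [Pi.add_apply, Pi.sub_apply] at hint
  rw [integral_add (hg.norm.const_mul (2 * ‖F‖)) (hi2.const_mul 2), integral_const_mul,
    integral_const_mul, integral_const_mul, integral_sub hi3 hi1,
    integral_add (integrable_const _) hg.norm, integral_const, integral_inner hg, hG,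
    inner_smul_right, real_inner_self_eq_norm_sq, hB, smul_eq_mul, Measure.real] at hint
  have hS : 0 < A + ‖F‖ := by positivity
  have e : 2 * ‖F‖ * B + 2 * (B / A * ‖F‖ ^ 2) = (A + ‖F‖) * (2 * B / A * ‖F‖) := by
    field_simp
  rw [e] at hint
  have := le_of_mul_le_mul_left hint hS
  linarith
end

section
/- Let (Ω, μ) be a finite measure space, let H be a real Hilbert space, let f : Ω → H be Bochner integrable, and let t ≥ 0. Assume that for every x ∈ Ω such that there is no α ≥ 0 with −f(x) = α·∫_Ω f dμ, one has ∫_Ω ‖f‖ dμ ≥ t·‖f(x)‖ + ‖t·f(x) − ∫_Ω f dμ‖, and assume ∫_Ω ‖f‖ dμ ≠ 0. Then (μ(Ω) − 2t)·‖∫_Ω f dμ‖ + t·∫_Ω ‖f‖ dμ ≥ ∫_Ω ‖t·f(ω) − ∫_Ω f dμ‖ dμ(ω). -/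
open MeasureTheory

theorem hlawka_integral_scaled {Ω H : Type*} [MeasurableSpace Ω]
    (μ : Measure Ω) [IsFiniteMeasure μ]
    [NormedAddCommGroup H] [InnerProductSpace ℝ H] [CompleteSpace H]
    (f : Ω → H) (hf : Integrable f μ) (t : ℝ) (ht : 0 ≤ t)
    (hnf : (∫ ω, ‖f ω‖ ∂μ) ≠ 0)
    (hctrl : ∀ x : Ω, (¬ ∃ α : ℝ, 0 ≤ α ∧ -f x = α • (∫ ω, f ω ∂μ)) →
      t * ‖f x‖ + ‖t • f x - ∫ ω, f ω ∂μ‖ ≤ ∫ ω, ‖f ω‖ ∂μ) :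
    ((μ Set.univ).toReal - 2 * t) * ‖∫ ω, f ω ∂μ‖ + t * ∫ ω, ‖f ω‖ ∂μ
      ≥ ∫ ω, ‖t • f ω - ∫ ω', f ω' ∂μ‖ ∂μ := by
  set S := ∫ ω, f ω ∂μ with hS
  set N := ∫ ω, ‖f ω‖ ∂μ with hN
  have hN0 : 0 < N := lt_of_le_of_ne (integral_nonneg fun _ => norm_nonneg _) (Ne.symm hnf)
  have hs0 : 0 ≤ ‖S‖ := norm_nonneg _
  have hpos : 0 < N + ‖S‖ := by linarith
  have key : ∀ x, (2 * t / (N + ‖S‖)) * (‖S‖ * ‖f x‖ + inner ℝ S (f x))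
      ≤ t * ‖f x‖ + ‖S‖ - ‖t • f x - S‖ := by
    intro x
    have htn : ‖t • f x‖ = t * ‖f x‖ := by
      rw [norm_smul, Real.norm_eq_abs, abs_of_nonneg ht]
    have hD : 0 ≤ t * ‖f x‖ + ‖S‖ - ‖t • f x - S‖ := by
      have := norm_sub_le (t • f x) S
      rw [htn] at this
      linarith
    by_cases hx : ∃ α : ℝ, 0 ≤ α ∧ -f x = α • S
    · obtain ⟨α, hα, h⟩ := hx
      have h' : f x = -(α • S) := by rw [← h, neg_neg]
      have hz : ‖S‖ * ‖f x‖ + inner ℝ S (f x) = 0 := by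
        rw [h', norm_neg, norm_smul, Real.norm_eq_abs, abs_of_nonneg hα, inner_neg_right,
          inner_smul_right, real_inner_self_eq_norm_sq]
        ring
      rw [hz, mul_zero]
      exact hD
    · have hc := hctrl x hx
      have hsq := norm_sub_sq_real (t • f x) S
      rw [htn, real_inner_smul_left, real_inner_comm] at hsq
      have e : (t * ‖f x‖ + ‖S‖ - ‖t • f x - S‖) * (t * ‖f x‖ + ‖S‖ + ‖t • f x - S‖)
          = 2 * t * (‖S‖ * ‖f x‖ + inner ℝ S (f x)) := by linarith
      rw [div_mul_eq_mul_div, div_le_iff₀ hpos, ← e]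
      exact mul_le_mul_of_nonneg_left (by linarith) hD
  have hin : Integrable (fun x => inner ℝ S (f x)) μ := hf.const_inner S
  have hi1 : Integrable (fun x => ‖S‖ * ‖f x‖) μ := hf.norm.const_mul _
  have hi2 : Integrable (fun x => t * ‖f x‖) μ := hf.norm.const_mul _
  have hi3 : Integrable (fun x => ‖t • f x - S‖) μ :=
    ((hf.smul t).sub (integrable_const S)).norm
  have hi4 : Integrable (fun _ : Ω => ‖S‖) μ := integrable_const _
  have hi5 : Integrable (fun x => t * ‖f x‖ + ‖S‖) μ := hi2.add hi4
  have hI := integral_mono ((hi1.add hin).const_mul (2 * t / (N + ‖S‖))) (hi5.sub hi3) key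
  have hL : ∫ x, (2 * t / (N + ‖S‖)) * (‖S‖ * ‖f x‖ + inner ℝ S (f x)) ∂μ = 2 * t * ‖S‖ := by
    rw [integral_const_mul, integral_add hi1 hin, integral_const_mul, integral_inner hf,
      ← hN, ← hS, real_inner_self_eq_norm_sq]
    field_simp
  have hR : ∫ x, (t * ‖f x‖ + ‖S‖ - ‖t • f x - S‖) ∂μ
      = t * N + (μ Set.univ).toReal * ‖S‖ - ∫ x, ‖t • f x - S‖ ∂μ := by
    rw [integral_sub hi5 hi3, integral_add hi2 hi4, integral_const_mul, integral_const,
      ← hN, smul_eq_mul]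
    rfl
  have hF := hL.symm.le.trans (hI.trans hR.le)
  linarith
end

section
/- Let H be a real inner product space with induced norm ‖·‖. Then for every λ ∈ [0, 1] and all x, y, z ∈ H: (1 − λ)·(‖x‖ + ‖y‖ + ‖z‖) + (1 + 2λ)·‖x + y + z‖ ≥ ‖λx + y + z‖ + ‖x + λy + z‖ + ‖x + y + λz‖. -/
theorem hlawka_aux {H : Type*} [NormedAddCommGroup H] [InnerProductSpace ℝ H] (x y z : H) :
    ‖y + z‖ + ‖x + z‖ + ‖x + y‖ ≤ ‖x‖ + ‖y‖ + ‖z‖ + ‖x + y + z‖ := by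
  have key : ‖y + z‖ ^ 2 + ‖x + z‖ ^ 2 + ‖x + y‖ ^ 2
      = ‖x‖ ^ 2 + ‖y‖ ^ 2 + ‖z‖ ^ 2 + ‖x + y + z‖ ^ 2 := by
    rw [norm_add_sq_real (x + y) z, norm_add_sq_real x y, norm_add_sq_real y z,
      norm_add_sq_real x z, inner_add_left]
    ring
  have h1 := norm_add_le y z
  have h2 := norm_add_le x z
  have h3 := norm_add_le x y
  have g1 : ‖y + z‖ ≤ ‖x‖ + ‖x + y + z‖ := by
    have := norm_sub_le (x + y + z) x
    rw [show x + y + z - x = y + z by abel] at this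
    linarith
  have g2 : ‖x + z‖ ≤ ‖y‖ + ‖x + y + z‖ := by
    have := norm_sub_le (x + y + z) y
    rw [show x + y + z - y = x + z by abel] at this
    linarith
  have g3 : ‖x + y‖ ≤ ‖z‖ + ‖x + y + z‖ := by
    have := norm_sub_le (x + y + z) z
    rw [show x + y + z - z = x + y by abel] at this
    linarith
  have a0 := norm_nonneg x
  have b0 := norm_nonneg y
  have c0 := norm_nonneg z
  have s0 := norm_nonneg (x + y + z)
  generalize ‖y + z‖ = p at *
  generalize ‖x + z‖ = q at *
  generalize ‖x + y‖ = r at *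
  generalize ‖x + y + z‖ = s at *
  generalize ‖x‖ = a at *
  generalize ‖y‖ = b at *
  generalize ‖z‖ = c at *
  by_contra! hc
  have m1 := mul_nonneg (sub_nonneg.2 h1) (sub_nonneg.2 g1)
  have m2 := mul_nonneg (sub_nonneg.2 h2) (sub_nonneg.2 g2)
  have m3 := mul_nonneg (sub_nonneg.2 h3) (sub_nonneg.2 g3)
  have hT : 0 < a + b + c + s := by
    by_contra! hT
    linarith
  have := mul_pos hT (sub_pos.2 hc)
  nlinarith

theorem hlawka_lambda {H : Type*} [NormedAddCommGroup H] [InnerProductSpace ℝ H]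
    (lam : ℝ) (hlam : lam ∈ Set.Icc (0 : ℝ) 1) (x y z : H) :
    ‖lam • x + y + z‖ + ‖x + lam • y + z‖ + ‖x + y + lam • z‖
      ≤ (1 - lam) * (‖x‖ + ‖y‖ + ‖z‖) + (1 + 2 * lam) * ‖x + y + z‖ := by
  obtain ⟨h0, h1⟩ := hlam
  have tri : ∀ u v : H, ‖lam • u + (1 - lam) • v‖ ≤ lam * ‖u‖ + (1 - lam) * ‖v‖ := by
    intro u v
    refine (norm_add_le _ _).trans ?_
    rw [norm_smul, norm_smul, Real.norm_of_nonneg h0, Real.norm_of_nonneg (sub_nonneg.2 h1)]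
  have t1 := tri (x + y + z) (y + z)
  have t2 := tri (x + y + z) (x + z)
  have t3 := tri (x + y + z) (x + y)
  rw [show lam • (x + y + z) + (1 - lam) • (y + z) = lam • x + y + z by module] at t1
  rw [show lam • (x + y + z) + (1 - lam) • (x + z) = x + lam • y + z by module] at t2
  rw [show lam • (x + y + z) + (1 - lam) • (x + y) = x + y + lam • z by module] at t3
  have := mul_le_mul_of_nonneg_left (hlawka_aux x y z) (sub_nonneg.2 h1)
  linarith
end
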